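/- Let C_N, C be collections of curves such that d_∞^*(C_N, C) → 0 as N → ∞, where C contains finitely many curves and C has no touchings. Then, identifying a collection of curves with the union of the ranges of its members, d_H(Ext C_N, Ext C) → 0, d_H(∂_o C_N, ∂_o C) → 0, and d_H(Hull C_N, Hull C) → 0 as N → ∞. (Theorem thm:collectionconv of the paper.) -/

import Mathlib

/-!
The proof rests on a logarithm criterion for the exterior of a compact set `K`: a point `z` lies in
`Ext K` exactly when `x ↦ log (x - z)` has a continuous branch on `K` (`exists_log_of_mem_extSet`
and `mem_extSet_of_log`).

The sets are Hausdorff close because the curves are uniformly close. Given that, closeness of hulls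
and outer boundaries follows from closeness of the exteriors (`hull_subset_thickening`,
`frontier_subset_thickening`), and a point of `Ext C` lies in `Ext C_N` for large `N` because a
compact path to a far away point avoids a neighbourhood of `C`. By compactness this gives one
inclusion between exteriors (`eventually_ext_subset`).

The other inclusion is where the absence of touchings enters. Suppose that a point `w` of `Ext C_N`
is very close to a point `z` of `Hull C` at distance at least `η` from `Ext C`. There is a branch of
`log (x - w)` on `C_N`. Pulled back along the parametrisations and corrected by the principal
logarithm of `(γ t - z) / (γ_N t - w)`, it gives for every curve `γ` of `C` a branch of
`log (γ t - z)` over the times at which `γ` is at distance at least `η / 2` from `z`. If `γ₁ s = γ₂ t`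
is a double point, then, as `(s, t)` is not a touching, the passages of the approximating curves near
it still meet, so the two values differ by less than `2π`; being logarithms of the same number, they
agree. Compactness makes the required closeness uniform over all double points. Hence the branches
descend to a branch of `log (x - z)` on `C` minus a ball around `z` (`exists_log_descent`), and `z` can
be joined to infinity without meeting `C` outside that ball. Such a connection enters the exterior of
`C` through a boundary point inside the ball, which is too close to `z`.
-/

open Filter Set MeasureTheory ProbabilityTheory Metric Bornology

noncomputable section

/-- A curve: a continuous function `γ : [0, t_γ] → ℂ` with finite time length `t_γ`. -/
structure Curve where
  len : ℝ
  len_nonneg : 0 ≤ len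
  toFun : ℝ → ℂ
  cont : ContinuousOn toFun (Set.Icc 0 len)

namespace Curve

/-- The range of a curve, viewed as a subset of the plane. -/
def range (γ : Curve) : Set ℂ := γ.toFun '' Set.Icc 0 γ.len

/-- `d_∞(γ, γ') = sup_{s ∈ [0,1]} |γ(s t_γ) − γ'(s t_{γ'})| + |t_γ − t_{γ'}|`. -/
def dInf (γ γ' : Curve) : ℝ :=
  (⨆ s : Set.Icc (0:ℝ) 1, dist (γ.toFun ((s : ℝ) * γ.len)) (γ'.toFun ((s : ℝ) * γ'.len)))
    + |γ.len - γ'.len|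

/-- The left endpoint `s⁻` of the largest subinterval `(s⁻, s⁺)` of `[0, γ'.len]` with
`s⁻ ≤ s ≤ s⁺` on whose interior `γ'` stays in the ball `B(c; δ)`. -/
def maxIntLo (γ' : Curve) (c : ℂ) (δ s : ℝ) : ℝ :=
  sSup ({0} ∪ {a | a ∈ Set.Icc 0 s ∧ γ'.toFun a ∉ Metric.ball c δ})

/-- The right endpoint `s⁺` of the largest subinterval `(s⁻, s⁺)` of `[0, γ'.len]` with
`s⁻ ≤ s ≤ s⁺` on whose interior `γ'` stays in the ball `B(c; δ)`. -/
def maxIntHi (γ' : Curve) (c : ℂ) (δ s : ℝ) : ℝ :=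
  sInf ({γ'.len} ∪ {b | b ∈ Set.Icc s γ'.len ∧ γ'.toFun b ∉ Metric.ball c δ})

/-- Definition of a touching `(s, t)` of a curve `γ`. -/
def HasTouching (γ : Curve) (s t : ℝ) : Prop :=
  0 ≤ s ∧ s < t ∧ t ≤ γ.len ∧ γ.toFun s = γ.toFun t ∧
  ∃ δ : ℝ, 0 < δ ∧ ∀ ε ∈ Set.Ioo (0:ℝ) δ, ∃ γ' : Curve, γ'.len = γ.len ∧ dInf γ γ' < ε ∧
    γ'.toFun '' Set.Icc (maxIntLo γ' (γ.toFun s) δ s) (maxIntHi γ' (γ.toFun s) δ s) ∩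
      γ'.toFun '' Set.Icc (maxIntLo γ' (γ.toFun t) δ t) (maxIntHi γ' (γ.toFun t) δ t) = ∅

/-- A curve has no touchings if no pair `(s, t)` is a touching of it. -/
def HasNoTouchings (γ : Curve) : Prop := ∀ s t : ℝ, ¬ γ.HasTouching s t

end Curve

namespace Curve

/-- Definition of a mutual touching `(s, t)` of a pair of curves `γ₁, γ₂`. -/
def HasMutualTouching (γ₁ γ₂ : Curve) (s t : ℝ) : Prop :=
  0 ≤ s ∧ s ≤ γ₁.len ∧ 0 ≤ t ∧ t ≤ γ₂.len ∧ γ₁.toFun s = γ₂.toFun t ∧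
  ∃ δ : ℝ, 0 < δ ∧ ∀ ε ∈ Set.Ioo (0:ℝ) δ, ∃ γ₁' γ₂' : Curve,
    γ₁'.len = γ₁.len ∧ γ₂'.len = γ₂.len ∧ dInf γ₁ γ₁' < ε ∧ dInf γ₂ γ₂' < ε ∧
    γ₁'.toFun '' Set.Icc (maxIntLo γ₁' (γ₁.toFun s) δ s) (maxIntHi γ₁' (γ₁.toFun s) δ s) ∩
      γ₂'.toFun '' Set.Icc (maxIntLo γ₂' (γ₂.toFun t) δ t) (maxIntHi γ₂' (γ₂.toFun t) δ t) = ∅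

end Curve

/-- A collection of curves has a touching if it contains a curve that has a touching, or a
pair of distinct curves that have a mutual touching. -/
def CollectionHasTouching (C : Set Curve) : Prop :=
  (∃ γ ∈ C, ∃ s t : ℝ, γ.HasTouching s t) ∨
  (∃ γ₁ ∈ C, ∃ γ₂ ∈ C, γ₁ ≠ γ₂ ∧ ∃ s t : ℝ, Curve.HasMutualTouching γ₁ γ₂ s t)

/-- A collection of curves, identified with the union of the ranges of its members. -/
def collRange (C : Set Curve) : Set ℂ := ⋃ γ ∈ C, γ.range

/-- The exterior `Ext A` of a bounded set `A ⊆ ℂ`: the (unique, for bounded `A`) unbounded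
connected component of `ℂ \ closure A`; here expressed as the set of points of
`ℂ \ closure A` whose connected component in `ℂ \ closure A` is unbounded. -/
def extSet (A : Set ℂ) : Set ℂ :=
  {z | ¬ Bornology.IsBounded (connectedComponentIn (closure A)ᶜ z)}

/-- The hull `Hull A = ℂ \ Ext A`. -/
def hullSet (A : Set ℂ) : Set ℂ := (extSet A)ᶜ

/-- The outer boundary `∂_o A`: the topological boundary of `Ext A`. -/
def outerBoundary (A : Set ℂ) : Set ℂ := frontier (extSet A)

/-- `dHLt A A' δ` expresses that the Hausdorff distance
`d_H(A, A') = inf {δ > 0 : A ⊆ (A')^δ and A' ⊆ A^δ}` is `< δ`; here `A^ε` is the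
`ε`-thickening `⋃_{x ∈ A} B(x; ε)` of `A`. -/
def dHLt (A A' : Set ℂ) (δ : ℝ) : Prop :=
  ∃ ε : ℝ, 0 < ε ∧ ε < δ ∧ A ⊆ Metric.thickening ε A' ∧ A' ⊆ Metric.thickening ε A

open scoped Topology

/-! ### The exterior of a bounded set -/

lemma meets_frontier {s E : Set ℂ} (hs : IsPreconnected s) (hE : IsOpen E) {a b : ℂ}
    (ha : a ∈ s) (haE : a ∈ E) (hb : b ∈ s) (hbE : b ∉ E) : ∃ p ∈ s, p ∈ frontier E := by
  by_contra! h
  have hsub : s ⊆ E ∪ (closure E)ᶜ := by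
    intro x hx
    by_cases hxE : x ∈ E
    · exact Or.inl hxE
    · right
      intro hc
      exact h x hx (by rw [hE.frontier_eq]; exact ⟨hc, hxE⟩)
  have := hs.subset_left_of_subset_union hE isClosed_closure.isOpen_compl
    (disjoint_left.2 fun x hx hx' => hx' (subset_closure hx)) hsub ⟨a, ha, haE⟩
  exact hbE (this hb)

lemma mem_compl_of_mem_extSet {A : Set ℂ} {z : ℂ} (hz : z ∈ extSet A) : z ∉ closure A := by
  intro h
  apply hz
  rw [connectedComponentIn_eq_empty (by simpa using h)]
  exact isBounded_empty

lemma mem_extSet_of_preconnected {A S : Set ℂ} (hS : IsPreconnected S) (hSA : S ⊆ (closure A)ᶜ)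
    (hb : ¬ IsBounded S) {z : ℂ} (hz : z ∈ S) : z ∈ extSet A :=
  fun h => hb (h.subset (hS.subset_connectedComponentIn hz hSA))

lemma mem_extSet_of_mem_component {A : Set ℂ} {z w : ℂ} (hz : z ∈ extSet A)
    (hw : w ∈ connectedComponentIn (closure A)ᶜ z) : w ∈ extSet A :=
  mem_extSet_of_preconnected isPreconnected_connectedComponentIn
    (connectedComponentIn_subset _ _) hz hw

lemma mem_extSet_of_meets {A S : Set ℂ} (hS : IsPreconnected S) (hSA : S ⊆ (closure A)ᶜ)
    {z w : ℂ} (hz : z ∈ S) (hzA : z ∈ extSet A) (hw : w ∈ S) : w ∈ extSet A :=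
  mem_extSet_of_mem_component hzA (hS.subset_connectedComponentIn hz hSA hw)

lemma isOpen_extSet (A : Set ℂ) : IsOpen (extSet A) := by
  rw [isOpen_iff_mem_nhds]
  intro z hz
  have ho : IsOpen (connectedComponentIn (closure A)ᶜ z) :=
    isClosed_closure.isOpen_compl.connectedComponentIn
  exact Filter.mem_of_superset
    (ho.mem_nhds (mem_connectedComponentIn (mem_compl_of_mem_extSet hz)))
    fun w hw => mem_extSet_of_mem_component hz hw

lemma frontier_extSet_subset (A : Set ℂ) : frontier (extSet A) ⊆ closure A := by
  intro p hp
  by_contra hpA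
  rw [(isOpen_extSet A).frontier_eq] at hp
  obtain ⟨ρ, hρ, hball⟩ := Metric.isOpen_iff.1 isClosed_closure.isOpen_compl p hpA
  obtain ⟨y, hy, hyd⟩ := Metric.mem_closure_iff.1 hp.1 ρ hρ
  exact hp.2 (mem_extSet_of_meets (convex_ball p ρ).isPreconnected hball
    (by rwa [mem_ball, dist_comm]) hy (mem_ball_self hρ))

/-- A preconnected set together with an outward ray based at one of its far points is a witness for
membership in the exterior. -/
lemma mem_extSet_of_ray {A S : Set ℂ} {R : ℝ} (hR : 0 ≤ R) (hA : A ⊆ closedBall 0 R)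
    (hS : IsPreconnected S) (hSA : S ⊆ (closure A)ᶜ) {v : ℂ} (hv : v ∈ S) (hvR : R < ‖v‖)
    {z : ℂ} (hz : z ∈ S) : z ∈ extSet A := by
  have hcl : closure A ⊆ closedBall 0 R := closure_minimal hA isClosed_closedBall
  set ray : Set ℂ := (fun t : ℝ => (t : ℂ) * v) '' Ici 1 with hray
  have hpre : IsPreconnected ray :=
    isPreconnected_Ici.image _ (by fun_prop)
  have hvr : v ∈ ray := ⟨1, by simp, by simp⟩
  refine mem_extSet_of_preconnected (S := S ∪ ray) (hS.union v hv hvr hpre) ?_ ?_ (Or.inl hz)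
  · refine union_subset hSA ?_
    rintro _ ⟨t, ht, rfl⟩ h
    have h1 := hcl h
    rw [mem_closedBall_zero_iff, norm_mul, Complex.norm_real, Real.norm_eq_abs] at h1
    have h2 : 1 ≤ |t| := le_trans (mem_Ici.1 ht) (le_abs_self t)
    nlinarith [norm_nonneg v]
  · intro hb
    obtain ⟨M, hM⟩ := (hb.subset (subset_union_right)).exists_norm_le
    have hv0 : 0 < ‖v‖ := hR.trans_lt hvR
    have h1 : (1 : ℝ) ≤ |M| / ‖v‖ + 1 := by
      have : 0 ≤ |M| / ‖v‖ := by positivity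
      linarith
    have := hM _ ⟨|M| / ‖v‖ + 1, h1, rfl⟩
    rw [norm_mul, Complex.norm_real, Real.norm_eq_abs, abs_of_nonneg (by linarith), add_mul,
      div_mul_cancel₀ _ hv0.ne'] at this
    linarith [le_abs_self M]

lemma mem_extSet_of_far {A : Set ℂ} {R : ℝ} (hR : 0 ≤ R) (hA : A ⊆ closedBall 0 R) {v : ℂ}
    (hv : R < ‖v‖) : v ∈ extSet A := by
  refine mem_extSet_of_ray hR hA isPreconnected_singleton ?_ (mem_singleton v) hv (mem_singleton v)
  rw [singleton_subset_iff]
  intro h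
  have := closure_minimal hA isClosed_closedBall h
  rw [mem_closedBall_zero_iff] at this
  linarith

/-! ### Logarithms and separation of the plane -/

/-- A branch of `x ↦ log (x - z)` on `S`. -/
def IsLogOn (L : ℂ → ℂ) (S : Set ℂ) (z : ℂ) : Prop :=
  ContinuousOn L S ∧ ∀ x ∈ S, Complex.exp (L x) = x - z

lemma IsLogOn.mono {L : ℂ → ℂ} {S T : Set ℂ} {z : ℂ} (h : IsLogOn L S z) (hT : T ⊆ S) :
    IsLogOn L T z := ⟨h.1.mono hT, fun x hx => h.2 x (hT hx)⟩

/-- If `w` is closer to `w'` than `S` is, the branch can be transported from `w` to `w'` by adding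
the principal logarithm of the quotient `(x - w') / (x - w)`, which is close to `1`. -/
lemma exists_log_transport {S : Set ℂ} {w w' : ℂ} (h : ∀ x ∈ S, dist w w' < dist x w)
    (hL : ∃ L, IsLogOn L S w) : ∃ L, IsLogOn L S w' := by
  obtain ⟨L, hLc, hLe⟩ := hL
  have key : ∀ x ∈ S, x - w ≠ 0 ∧ 1 + (w - w') / (x - w) ∈ Complex.slitPlane := by
    intro x hx
    have hx' := h x hx
    rw [dist_eq_norm, dist_eq_norm] at hx'
    have h0 : 0 < ‖x - w‖ := (norm_nonneg _).trans_lt hx'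
    refine ⟨norm_pos_iff.1 h0, Complex.mem_slitPlane_of_norm_lt_one ?_⟩
    rw [norm_div, div_lt_one h0]
    exact hx'
  refine ⟨fun x => L x + Complex.log (1 + (w - w') / (x - w)), ?_, ?_⟩
  · refine hLc.add (ContinuousOn.clog ?_ fun x hx => (key x hx).2)
    exact continuousOn_const.add (continuousOn_const.div (by fun_prop) fun x hx => (key x hx).1)
  · intro x hx
    obtain ⟨h1, h2⟩ := key x hx
    rw [Complex.exp_add, hLe x hx, Complex.exp_log (Complex.slitPlane_ne_zero h2)]
    field_simp
    ring

/-- Points of the exterior see a branch of the logarithm on the compact set: one exists for base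
points near infinity, and its existence is locally constant in the base point. -/
lemma exists_log_of_mem_extSet {A : Set ℂ} (hA : IsBounded A) {z : ℂ} (hz : z ∈ extSet A) :
    ∃ L, IsLogOn L (closure A) z := by
  obtain ⟨R, hR, hAR⟩ : ∃ R : ℝ, 0 < R ∧ closure A ⊆ closedBall 0 R := by
    obtain ⟨R, hR⟩ := hA.subset_closedBall 0
    refine ⟨max R 1, by positivity, ?_⟩
    exact (closure_minimal hR isClosed_closedBall).trans (closedBall_subset_closedBall (le_max_left _ _))
  set U : Set ℂ := {w | w ∉ closure A ∧ ∃ L, IsLogOn L (closure A) w}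
  set V : Set ℂ := {w | w ∉ closure A ∧ ¬ ∃ L, IsLogOn L (closure A) w}
  have hnear : ∀ w ∉ closure A, ∃ ρ > 0, ∀ w' ∈ ball w ρ, w' ∉ closure A ∧
      ((∃ L, IsLogOn L (closure A) w) ↔ ∃ L, IsLogOn L (closure A) w') := by
    intro w hw
    obtain ⟨ρ, hρ, hball⟩ := Metric.isOpen_iff.1 isClosed_closure.isOpen_compl w hw
    have hd : ∀ x ∈ closure A, ρ ≤ dist x w := by
      intro x hx
      by_contra! hlt
      exact hball hlt hx
    refine ⟨ρ / 2, by positivity, fun w' hw' => ?_⟩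
    rw [mem_ball] at hw'
    refine ⟨hball (by rw [mem_ball]; linarith), exists_log_transport ?_, exists_log_transport ?_⟩
    · intro x hx
      rw [dist_comm w w']
      linarith [hd x hx]
    · intro x hx
      have := dist_triangle x w' w
      linarith [hd x hx]
  have hU : IsOpen U := by
    rw [Metric.isOpen_iff]
    intro w hw
    obtain ⟨ρ, hρ, h⟩ := hnear w hw.1
    exact ⟨ρ, hρ, fun w' hw' => ⟨(h w' hw').1, (h w' hw').2.1 hw.2⟩⟩
  have hV : IsOpen V := by
    rw [Metric.isOpen_iff]
    intro w hw
    obtain ⟨ρ, hρ, h⟩ := hnear w hw.1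
    exact ⟨ρ, hρ, fun w' hw' => ⟨(h w' hw').1, fun h' => hw.2 ((h w' hw').2.2 h')⟩⟩
  obtain ⟨v, hv, hvR⟩ : ∃ v ∈ connectedComponentIn (closure A)ᶜ z, R < ‖v‖ := by
    by_contra! h
    exact hz ((isBounded_closedBall (x := (0:ℂ)) (r := R)).subset fun v hv => by simpa using h v hv)
  have hvU : v ∈ U := by
    refine ⟨connectedComponentIn_subset _ _ hv, ?_⟩
    have hv0 : v ≠ 0 := norm_pos_iff.1 (hR.trans hvR)
    have key : ∀ x ∈ closure A, 1 + (-x / v) ∈ Complex.slitPlane := by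
      intro x hx
      apply Complex.mem_slitPlane_of_norm_lt_one
      rw [norm_div, norm_neg, div_lt_one (hR.trans hvR)]
      have := hAR hx
      rw [mem_closedBall_zero_iff] at this
      linarith
    refine ⟨fun x => Complex.log (-v) + Complex.log (1 + (-x / v)), ?_, ?_⟩
    · exact continuousOn_const.add (ContinuousOn.clog (by fun_prop) key)
    · intro x hx
      rw [Complex.exp_add, Complex.exp_log (neg_ne_zero.2 hv0),
        Complex.exp_log (Complex.slitPlane_ne_zero (key x hx))]
      field_simp
      ring
  have hsub := isPreconnected_connectedComponentIn.subset_left_of_subset_union hU hV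
    (disjoint_left.2 fun x hx hx' => hx'.2 hx.2)
    (fun w hw => by
      have := connectedComponentIn_subset _ _ hw
      by_cases h : ∃ L, IsLogOn L (closure A) w
      · exact Or.inl ⟨this, h⟩
      · exact Or.inr ⟨this, h⟩) ⟨v, hv, hvU⟩
  exact (hsub (mem_connectedComponentIn (mem_compl_of_mem_extSet hz))).2

/-- A continuous function with constant exponential on a preconnected set is constant. -/
lemma eq_of_exp_const {α : Type*} [TopologicalSpace α] {S : Set α} (hS : IsPreconnected S)
    {f : α → ℂ} (hf : ContinuousOn f S) {k : ℂ} (h : ∀ t ∈ S, Complex.exp (f t) = k) {a b : α}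
    (ha : a ∈ S) (hb : b ∈ S) : f a = f b := by
  have hk : k ≠ 0 := by rw [← h a ha]; exact Complex.exp_ne_zero _
  refine hS.constant_of_mapsTo (T := Complex.exp ⁻¹' {k}) ?_ hf (fun t ht => h t ht) ha hb
  exact isDiscrete_iff_discreteTopology.2 (Complex.isCoveringMapOn_exp k hk).discreteTopology_fiber

lemma isSimplyConnected_univ_complex : IsSimplyConnected (univ : Set ℂ) := by
  have : ContractibleSpace (univ : Set ℂ) :=
    (convex_univ (𝕜 := ℝ) (E := ℂ)).contractibleSpace ⟨0, mem_univ _⟩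
  exact (inferInstance : SimplyConnectedSpace (univ : Set ℂ))

/-- A nowhere vanishing continuous function on the plane has a continuous logarithm, so it cannot
agree with `x - z` on a circle around `z`. -/
lemma no_nonvanishing_extension {g : ℂ → ℂ} (hg : Continuous g) (hg0 : ∀ x, g x ≠ 0) {z : ℂ} {R : ℝ}
    (hR : 0 < R) (h : ∀ x, dist x z = R → g x = x - z) : False := by
  obtain ⟨G, hGc, hG⟩ := Complex.exists_continuousOn_eqOn_exp_comp (X := ℂ) (U := univ)
    (g := g) isSimplyConnected_univ_complex isOpen_univ hg.continuousOn (by simpa using hg0)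
  rw [continuousOn_univ] at hGc
  set c : ℝ → ℂ := fun t => z + R * Complex.exp (t * Complex.I) with hc
  have hcc : Continuous c := by fun_prop
  have hcd : ∀ t, dist (c t) z = R := by
    intro t
    simp [hc, dist_eq_norm, Complex.norm_exp_ofReal_mul_I, abs_of_pos hR]
  have hper : c (2 * Real.pi) = c 0 := by
    simp [hc, Complex.exp_two_pi_mul_I]
  have hexp : ∀ t, Complex.exp (G (c t)) = R * Complex.exp (t * Complex.I) := by
    intro t
    have h1 : Complex.exp (G (c t)) = g (c t) := hG (mem_univ (c t))
    rw [h1, h _ (hcd t)]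
    simp [hc]
  have hR' : (R : ℂ) ≠ 0 := by exact_mod_cast hR.ne'
  have hval : ∀ t : ℝ, Complex.exp (G (c t) - t * Complex.I) = R := by
    intro t
    rw [Complex.exp_sub, hexp, mul_div_cancel_right₀ _ (Complex.exp_ne_zero _)]
  -- `G (c t) - t I` is a logarithm of `R` depending continuously on `t`, hence constant, while
  -- `G ∘ c` has period `2π`.
  have hconst := eq_of_exp_const (S := univ) isPreconnected_univ
    (f := fun t : ℝ => G (c t) - t * Complex.I) (by fun_prop) (fun t _ => hval t)
    (mem_univ 0) (mem_univ (2 * Real.pi))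
  simp only [hper] at hconst
  have him := congrArg Complex.im hconst
  simp at him
  linarith [Real.pi_pos]

/-- A compact set carrying a branch of `log (x - z)` does not separate `z` from infinity (one half
of Borsuk's separation criterion). Otherwise the exponential of a Tietze extension of the branch,
used in the bounded component of `z`, would extend `x - z` from outside without zeros. -/
lemma mem_extSet_of_log {K : Set ℂ} (hK : IsCompact K) {z : ℂ} {L : ℂ → ℂ} (hL : IsLogOn L K z) :
    z ∈ extSet K := by
  classical
  intro hb
  rw [hK.isClosed.closure_eq] at hb
  have hzK : z ∈ Kᶜ := by
    intro h
    have := hL.2 z h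
    simp at this
  set D := connectedComponentIn Kᶜ z with hD
  have hDo : IsOpen D := hK.isClosed.isOpen_compl.connectedComponentIn
  have hfr : frontier D ⊆ K := by
    intro p hp
    by_contra hpK
    rw [hDo.frontier_eq] at hp
    obtain ⟨ρ, hρ, hball⟩ := Metric.isOpen_iff.1 hK.isClosed.isOpen_compl p hpK
    obtain ⟨y, hy, hyd⟩ := Metric.mem_closure_iff.1 hp.1 ρ hρ
    apply hp.2
    rw [hD, connectedComponentIn_eq hy]
    exact (convex_ball p ρ).isPreconnected.subset_connectedComponentIn
      (by rwa [mem_ball, dist_comm]) hball (mem_ball_self hρ)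
  obtain ⟨H, hH⟩ := ContinuousMap.exists_restrict_eq hK.isClosed ⟨_, hL.1.domRestrict⟩
  have hHL : ∀ x ∈ K, H x = L x := fun x hx => DFunLike.congr_fun hH ⟨x, hx⟩
  set g : ℂ → ℂ := fun x => if x ∈ D then Complex.exp (H x) else x - z with hg
  have hgc : Continuous g := by
    refine Continuous.if ?_ (by fun_prop) (by fun_prop)
    intro a ha
    have := hfr ha
    rw [hHL a this, hL.2 a this]
  have hzD : z ∈ D := mem_connectedComponentIn hzK
  obtain ⟨R, hR⟩ := hb.subset_closedBall z
  refine no_nonvanishing_extension hgc ?_ (z := z) (R := max R 0 + 1) (by positivity) ?_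
  · intro x
    by_cases hx : x ∈ D
    · simp [hg, hx]
    · simp only [hg, hx, if_false]
      intro h
      exact hx (sub_eq_zero.1 h ▸ hzD)
  · intro x hx
    have : x ∉ D := by
      intro h
      have := hR h
      rw [mem_closedBall, hx] at this
      linarith [le_max_left R 0]
    simp [hg, this]

/-! ### Curves, passages and perturbations -/

namespace Curve

lemma exists_param (γ : Curve) {u : ℝ} (hu : u ∈ Icc 0 γ.len) :
    ∃ s ∈ Icc (0 : ℝ) 1, u = s * γ.len := by
  rcases γ.len_nonneg.eq_or_lt with h | h
  · exact ⟨0, by simp, by rw [← h] at hu ⊢; simpa using hu⟩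
  · refine ⟨u / γ.len, ⟨div_nonneg hu.1 h.le, (div_le_one h).2 hu.2⟩, ?_⟩
    field_simp

lemma mul_len_mem (γ : Curve) {s : ℝ} (hs : s ∈ Icc (0 : ℝ) 1) : s * γ.len ∈ Icc 0 γ.len :=
  ⟨mul_nonneg hs.1 γ.len_nonneg, mul_le_of_le_one_left γ.len_nonneg hs.2⟩

lemma continuous_param (γ : Curve) : Continuous fun s : Icc (0 : ℝ) 1 => γ.toFun ((s : ℝ) * γ.len) :=
  γ.cont.comp_continuous (by fun_prop) fun s => γ.mul_len_mem s.2

lemma dist_le_dInf (γ γ' : Curve) {s : ℝ} (hs : s ∈ Icc (0 : ℝ) 1) :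
    dist (γ.toFun (s * γ.len)) (γ'.toFun (s * γ'.len)) ≤ dInf γ γ' := by
  have hb : BddAbove (Set.range fun s : Icc (0 : ℝ) 1 =>
      dist (γ.toFun ((s : ℝ) * γ.len)) (γ'.toFun ((s : ℝ) * γ'.len))) :=
    (isCompact_range (γ.continuous_param.dist γ'.continuous_param)).bddAbove
  have := le_ciSup hb ⟨s, hs⟩
  unfold dInf
  linarith [abs_nonneg (γ.len - γ'.len)]

lemma dist_le_dInf_of_len_eq {γ γ' : Curve} (h : γ'.len = γ.len) {u : ℝ} (hu : u ∈ Icc 0 γ.len) :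
    dist (γ.toFun u) (γ'.toFun u) ≤ dInf γ γ' := by
  obtain ⟨s, hs, rfl⟩ := γ.exists_param hu
  have := dist_le_dInf γ γ' hs
  rwa [h] at this

/-- The curve run through affinely in time `l`. For `l = 0` the division by zero makes this the
constant curve at the starting point of `γ`. -/
def rescale (γ : Curve) (l : ℝ) (hl : 0 ≤ l) : Curve where
  len := l
  len_nonneg := hl
  toFun u := γ.toFun (u * (γ.len / l))
  cont := by
    refine γ.cont.comp (by fun_prop) fun u hu => ?_
    refine ⟨mul_nonneg hu.1 (div_nonneg γ.len_nonneg hl), ?_⟩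
    rcases hl.eq_or_lt with h | h
    · subst h; simpa using γ.len_nonneg
    · rw [← mul_div_assoc, div_le_iff₀ h, mul_comm]
      exact mul_le_mul_of_nonneg_left hu.2 γ.len_nonneg

lemma rescale_param (γ : Curve) {l : ℝ} (hl : 0 ≤ l) {s : ℝ} (hs : s ∈ Icc (0 : ℝ) 1) :
    ∃ s' ∈ Icc (0 : ℝ) 1, (γ.rescale l hl).toFun (s * l) = γ.toFun (s' * γ.len) ∧ s * l = s' * l := by
  rcases hl.eq_or_lt with h | h
  · subst h
    exact ⟨0, by simp, by simp [rescale], by simp⟩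
  · refine ⟨s, hs, ?_, rfl⟩
    simp only [rescale]
    congr 1
    field_simp

lemma range_rescale_subset (γ : Curve) {l : ℝ} (hl : 0 ≤ l) : (γ.rescale l hl).range ⊆ γ.range := by
  rintro _ ⟨u, hu, rfl⟩
  obtain ⟨s, hs, rfl⟩ := (γ.rescale l hl).exists_param hu
  obtain ⟨s', hs', h, -⟩ := γ.rescale_param hl hs
  exact ⟨s' * γ.len, γ.mul_len_mem hs', h.symm⟩

/-- Rescaling a curve close to `γ` to the time length of `γ` does not take it further away. -/
lemma dInf_rescale_le (γ γ' : Curve) : dInf γ (γ'.rescale γ.len γ.len_nonneg) ≤ dInf γ' γ := by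
  unfold dInf
  have h0 : γ.len - (γ'.rescale γ.len γ.len_nonneg).len = 0 := sub_self _
  rw [h0, abs_zero, add_zero]
  have : Nonempty (Icc (0 : ℝ) 1) := ⟨0, by simp⟩
  refine ciSup_le fun s => ?_
  obtain ⟨s', hs', h, h'⟩ := γ'.rescale_param γ.len_nonneg s.2
  change dist _ ((γ'.rescale γ.len γ.len_nonneg).toFun (s * γ.len)) ≤ _
  rw [h, h', dist_comm]
  exact dist_le_dInf γ' γ hs'

lemma isCompact_range (γ : Curve) : IsCompact γ.range := isCompact_Icc.image_of_continuousOn γ.cont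

lemma exists_dist_le_dInf_left {γ γ' : Curve} {x : ℂ} (hx : x ∈ γ.range) :
    ∃ y ∈ γ'.range, dist x y ≤ dInf γ γ' := by
  obtain ⟨u, hu, rfl⟩ := hx
  obtain ⟨s, hs, rfl⟩ := γ.exists_param hu
  exact ⟨_, ⟨_, γ'.mul_len_mem hs, rfl⟩, dist_le_dInf γ γ' hs⟩

lemma exists_dist_le_dInf_right {γ γ' : Curve} {x : ℂ} (hx : x ∈ γ'.range) :
    ∃ y ∈ γ.range, dist x y ≤ dInf γ γ' := by
  obtain ⟨u, hu, rfl⟩ := hx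
  obtain ⟨s, hs, rfl⟩ := γ'.exists_param hu
  exact ⟨_, ⟨_, γ.mul_len_mem hs, rfl⟩, by rw [dist_comm]; exact dist_le_dInf γ γ' hs⟩

section passage

variable {γ : Curve} {c : ℂ} {δ s a : ℝ}

lemma bddAbove_maxIntLo (hs : s ∈ Icc 0 γ.len) :
    BddAbove ({0} ∪ {a | a ∈ Set.Icc 0 s ∧ γ.toFun a ∉ Metric.ball c δ}) := by
  refine ⟨s, ?_⟩
  rintro x (rfl | hx)
  · exact hs.1
  · exact hx.1.2

lemma bddBelow_maxIntHi (hs : s ∈ Icc 0 γ.len) :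
    BddBelow ({γ.len} ∪ {b | b ∈ Set.Icc s γ.len ∧ γ.toFun b ∉ Metric.ball c δ}) := by
  refine ⟨s, ?_⟩
  rintro x (rfl | hx)
  · exact hs.2
  · exact hx.1.1

lemma mem_passage (hs : s ∈ Icc 0 γ.len) :
    s ∈ Icc (maxIntLo γ c δ s) (maxIntHi γ c δ s) := by
  constructor
  · refine csSup_le ⟨0, Or.inl rfl⟩ ?_
    rintro x (rfl | hx)
    · exact hs.1
    · exact hx.1.2
  · refine le_csInf ⟨γ.len, Or.inl rfl⟩ ?_
    rintro x (rfl | hx)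
    · exact hs.2
    · exact hx.1.1

lemma passage_subset (hs : s ∈ Icc 0 γ.len) :
    Icc (maxIntLo γ c δ s) (maxIntHi γ c δ s) ⊆ Icc 0 γ.len :=
  Icc_subset_Icc (le_csSup (bddAbove_maxIntLo hs) (Or.inl rfl))
    (csInf_le (bddBelow_maxIntHi hs) (Or.inl rfl))

/-- The stretch of a passage through the ball between its base time and any other time stays in the
closed ball: it is in the open ball except possibly at the end point. -/
lemma passage_mem_closedBall (hs : s ∈ Icc 0 γ.len) (hsc : γ.toFun s ∈ ball c δ)
    (ha : a ∈ Icc (maxIntLo γ c δ s) (maxIntHi γ c δ s)) :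
    ∀ u ∈ uIcc s a, γ.toFun u ∈ closedBall c δ := by
  have hlen := passage_subset hs ha
  rcases lt_trichotomy a s with h | rfl | h
  · have hin : MapsTo γ.toFun (Ioc a s) (ball c δ) := by
      intro u hu
      by_contra hc
      have : u ≤ maxIntLo γ c δ s :=
        le_csSup (bddAbove_maxIntLo hs) (Or.inr ⟨⟨hlen.1.trans hu.1.le, hu.2⟩, hc⟩)
      exact absurd (hu.1.trans_le this) (not_lt.2 ha.1)
    intro u hu
    rw [uIcc_of_ge h.le] at hu
    have hcl := hin.closure_of_continuousOn (γ.cont.mono (by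
      rw [closure_Ioc h.ne]; exact Icc_subset_Icc hlen.1 hs.2))
    exact closure_ball_subset_closedBall (hcl (by rwa [closure_Ioc h.ne]))
  · intro u hu
    rw [uIcc_self, mem_singleton_iff] at hu
    exact hu ▸ ball_subset_closedBall hsc
  · have hin : MapsTo γ.toFun (Ico s a) (ball c δ) := by
      intro u hu
      by_contra hc
      have : maxIntHi γ c δ s ≤ u :=
        csInf_le (bddBelow_maxIntHi hs) (Or.inr ⟨⟨hu.1, hu.2.le.trans hlen.2⟩, hc⟩)
      exact absurd (hu.2.trans_le ha.2) (not_lt.2 this)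
    intro u hu
    rw [uIcc_of_le h.le] at hu
    have hcl := hin.closure_of_continuousOn (γ.cont.mono (by
      rw [closure_Ico h.ne]; exact Icc_subset_Icc hs.1 hlen.2))
    exact closure_ball_subset_closedBall (hcl (by rwa [closure_Ico h.ne]))

end passage

end Curve

/-- A map `g` moving every curve of `C` by less than `ε` without changing its time length. -/
def IsPert (C : Set Curve) (g : Curve → Curve) (ε : ℝ) : Prop :=
  ∀ γ ∈ C, (g γ).len = γ.len ∧ Curve.dInf γ (g γ) < ε

lemma IsPert.mono {C : Set Curve} {g : Curve → Curve} {ε ε' : ℝ} (h : IsPert C g ε) (hε : ε ≤ ε') :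
    IsPert C g ε' := fun γ hγ => ⟨(h γ hγ).1, (h γ hγ).2.trans_le hε⟩

/-- Absence of touchings in positive form: at every double point the two passages keep intersecting
under all sufficiently small perturbations. -/
lemma exists_crossing {C : Set Curve} (hno : ¬ CollectionHasTouching C) {γ₁ γ₂ : Curve}
    (h₁ : γ₁ ∈ C) (h₂ : γ₂ ∈ C) {s t : ℝ} (hs : s ∈ Icc 0 γ₁.len) (ht : t ∈ Icc 0 γ₂.len)
    (hst : γ₁.toFun s = γ₂.toFun t) {δ : ℝ} (hδ : 0 < δ) :
    ∃ ε ∈ Ioo 0 δ, ∀ g, IsPert C g ε →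
      ∃ a ∈ Icc (Curve.maxIntLo (g γ₁) (γ₁.toFun s) δ s) (Curve.maxIntHi (g γ₁) (γ₁.toFun s) δ s),
      ∃ b ∈ Icc (Curve.maxIntLo (g γ₂) (γ₂.toFun t) δ t) (Curve.maxIntHi (g γ₂) (γ₂.toFun t) δ t),
        (g γ₁).toFun a = (g γ₂).toFun b := by
  have hself : ∀ {γ : Curve}, γ ∈ C → ∀ {s t : ℝ}, s ∈ Icc 0 γ.len → t ∈ Icc 0 γ.len →
      γ.toFun s = γ.toFun t → s < t → ∃ ε ∈ Ioo 0 δ, ∀ g, IsPert C g ε →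
      ∃ a ∈ Icc (Curve.maxIntLo (g γ) (γ.toFun s) δ s) (Curve.maxIntHi (g γ) (γ.toFun s) δ s),
      ∃ b ∈ Icc (Curve.maxIntLo (g γ) (γ.toFun t) δ t) (Curve.maxIntHi (g γ) (γ.toFun t) δ t),
        (g γ).toFun a = (g γ).toFun b := by
    intro γ hγ s t hs ht hst hlt
    by_contra! hcon
    refine hno (Or.inl ⟨γ, hγ, s, t, hs.1, hlt, ht.2, hst, δ, hδ, fun ε hε => ?_⟩)
    obtain ⟨g, hg, hgd⟩ := hcon ε hε
    refine ⟨g γ, (hg γ hγ).1, (hg γ hγ).2, ?_⟩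
    rw [← disjoint_iff_inter_eq_empty, disjoint_left]
    rintro _ ⟨a, ha, rfl⟩ ⟨b, hb, hab⟩
    exact hgd a ha b hb hab.symm
  by_cases hne : γ₁ = γ₂
  · subst hne
    rcases lt_trichotomy s t with h | rfl | h
    · exact hself h₁ hs ht hst h
    · refine ⟨δ / 2, ⟨by linarith, by linarith⟩, fun g hg => ?_⟩
      have := Curve.mem_passage (γ := g γ₁) (c := γ₁.toFun s) (δ := δ) (s := s)
        (by rwa [(hg γ₁ h₁).1])
      exact ⟨s, this, s, this, rfl⟩
    · obtain ⟨ε, hε, H⟩ := hself h₁ ht hs hst.symm h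
      refine ⟨ε, hε, fun g hg => ?_⟩
      obtain ⟨a, ha, b, hb, hab⟩ := H g hg
      exact ⟨b, hb, a, ha, hab.symm⟩
  · by_contra! hcon
    refine hno (Or.inr ⟨γ₁, h₁, γ₂, h₂, hne, s, t, hs.1, hs.2, ht.1, ht.2, hst, δ, hδ,
      fun ε hε => ?_⟩)
    obtain ⟨g, hg, hgd⟩ := hcon ε hε
    refine ⟨g γ₁, g γ₂, (hg γ₁ h₁).1, (hg γ₂ h₂).1, (hg γ₁ h₁).2, (hg γ₂ h₂).2, ?_⟩
    rw [← disjoint_iff_inter_eq_empty, disjoint_left]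
    rintro _ ⟨a, ha, rfl⟩ ⟨b, hb, hab⟩
    exact hgd a ha b hb hab.symm

/-! ### Descent of logarithms from perturbations -/

lemma norm_log_one_add_le_of_half {z : ℂ} (hz : ‖z‖ ≤ 1 / 2) : ‖Complex.log (1 + z)‖ ≤ 3 / 4 := by
  have := Complex.norm_log_one_add_half_le_self hz
  linarith

/-- A branch of the logarithm varies little along a path that stays in a ball seen from `w` under a
small angle. -/
lemma log_variation {S : Set ℝ} (hS : IsPreconnected S) {f : ℝ → ℂ} (hf : ContinuousOn f S)
    {X : Set ℂ} {L : ℂ → ℂ} {w c : ℂ} (hL : IsLogOn L X w) (hfX : MapsTo f S X) (hc : c ≠ w)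
    (hd : ∀ u ∈ S, dist (f u) c ≤ dist c w / 2) {a b : ℝ} (ha : a ∈ S) (hb : b ∈ S) :
    ‖L (f a) - L (f b)‖ ≤ 3 / 2 := by
  have hcw : c - w ≠ 0 := sub_ne_zero.2 hc
  have hpos : 0 < ‖c - w‖ := norm_pos_iff.2 hcw
  have hsmall : ∀ u ∈ S, ‖(f u - c) / (c - w)‖ ≤ 1 / 2 := by
    intro u hu
    have := hd u hu
    rw [dist_eq_norm, dist_eq_norm] at this
    rw [norm_div, div_le_iff₀ hpos]
    linarith
  have hslit : ∀ u ∈ S, 1 + (f u - c) / (c - w) ∈ Complex.slitPlane := fun u hu =>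
    Complex.mem_slitPlane_of_norm_lt_one ((hsmall u hu).trans_lt (by norm_num))
  have hconst := eq_of_exp_const hS
    (f := fun u => L (f u) - Complex.log (1 + (f u - c) / (c - w))) (k := c - w)
    ((hL.1.comp hf hfX).sub (ContinuousOn.clog (by fun_prop (disch := assumption)) hslit))
    (fun u hu => by
      have h0 : f u - w ≠ 0 := by rw [← hL.2 _ (hfX hu)]; exact Complex.exp_ne_zero _
      have h1 : 1 + (f u - c) / (c - w) = (f u - w) / (c - w) := by field_simp; ring
      rw [Complex.exp_sub, hL.2 _ (hfX hu), Complex.exp_log (Complex.slitPlane_ne_zero (hslit u hu)),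
        h1]
      field_simp) ha hb
  have heq : L (f a) - L (f b) =
      Complex.log (1 + (f a - c) / (c - w)) - Complex.log (1 + (f b - c) / (c - w)) := by
    linear_combination hconst
  rw [heq]
  refine (norm_sub_le _ _).trans ?_
  linarith [norm_log_one_add_le_of_half (hsmall a ha), norm_log_one_add_le_of_half (hsmall b hb)]

/-- Along a perturbed passage based at time `s`, extended to a nearby time `s'`, a branch of the
logarithm varies little. -/
lemma log_variation_passage {γ γ' : Curve} (hlen : γ'.len = γ.len) {s s' δ ε : ℝ}
    (hs : s ∈ Icc 0 γ.len) (hs' : s' ∈ Icc 0 γ.len) (hδ : 0 < δ) (hε : ε ≤ δ / 2)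
    (hd : Curve.dInf γ γ' < ε) (hnear : ∀ u ∈ uIcc s s', dist (γ.toFun u) (γ.toFun s) < δ / 2)
    {X : Set ℂ} {L : ℂ → ℂ} {w : ℂ} (hL : IsLogOn L X w) (hX : γ'.range ⊆ X)
    (hw : 2 * δ ≤ dist (γ.toFun s) w) {a : ℝ}
    (ha : a ∈ Icc (γ'.maxIntLo (γ.toFun s) δ s) (γ'.maxIntHi (γ.toFun s) δ s)) :
    ‖L (γ'.toFun a) - L (γ'.toFun s')‖ ≤ 3 / 2 := by
  have hs₁ : s ∈ Icc 0 γ'.len := by rwa [hlen]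
  have hsub' : uIcc s s' ⊆ Icc 0 γ.len := OrdConnected.uIcc_subset ordConnected_Icc hs hs'
  have ha' := Curve.passage_subset hs₁ ha
  have hsub : uIcc s a ∪ uIcc s s' ⊆ Icc 0 γ'.len :=
    union_subset (OrdConnected.uIcc_subset ordConnected_Icc hs₁ ha') (by rwa [hlen])
  have hball : ∀ u ∈ uIcc s s', γ'.toFun u ∈ ball (γ.toFun s) δ := by
    intro u hu
    have h1 := Curve.dist_le_dInf_of_len_eq hlen (hsub' hu)
    have h2 := hnear u hu
    have h3 := dist_triangle_left (γ'.toFun u) (γ.toFun s) (γ.toFun u)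
    rw [mem_ball]
    linarith
  refine log_variation (S := uIcc s a ∪ uIcc s s') (c := γ.toFun s) (w := w)
    (isPreconnected_uIcc.union s left_mem_uIcc left_mem_uIcc isPreconnected_uIcc)
    (γ'.cont.mono hsub) hL (fun u hu => hX ⟨u, hsub hu, rfl⟩) ?_ ?_
    (Or.inl right_mem_uIcc) (Or.inr right_mem_uIcc)
  · rw [← dist_pos]
    linarith
  · have hle : ∀ u ∈ uIcc s a ∪ uIcc s s', dist (γ'.toFun u) (γ.toFun s) ≤ δ := by
      rintro u (hu | hu)
      · exact Curve.passage_mem_closedBall hs₁ (hball s left_mem_uIcc) ha u hu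
      · exact (hball u hu).le
    intro u hu
    linarith [hle u hu]

lemma Curve.exists_near (γ : Curve) {s : ℝ} (hs : s ∈ Icc 0 γ.len) {ρ : ℝ} (hρ : 0 < ρ) :
    ∃ η > 0, ∀ s' ∈ Icc 0 γ.len, dist s' s < η →
      ∀ u ∈ uIcc s s', dist (γ.toFun u) (γ.toFun s) < ρ := by
  obtain ⟨η, hη, h⟩ := Metric.continuousOn_iff.1 γ.cont s hs ρ hρ
  refine ⟨η, hη, fun s' hs' hd u hu => ?_⟩
  refine h u (OrdConnected.uIcc_subset ordConnected_Icc hs hs' hu) (lt_of_le_of_lt ?_ hd)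
  rw [Real.dist_eq, Real.dist_eq]
  exact abs_sub_left_of_mem_uIcc hu

/-- The perturbed values at the times `s`, `t` of the two curves are not separated by any branch of
the logarithm on the perturbed curves, for base points near `z`. -/
def LogClose (C : Set Curve) (z : ℂ) (r : ℝ) (g : Curve → Curve) (γ₁ γ₂ : Curve) (s t : ℝ) : Prop :=
  ∀ (X : Set ℂ) (L : ℂ → ℂ) (w : ℂ), IsLogOn L X w → (∀ γ ∈ C, (g γ).range ⊆ X) →
    dist w z ≤ r / 8 → ‖L ((g γ₁).toFun s) - L ((g γ₂).toFun t)‖ ≤ 3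

/-- Near a double point, a common point of the two perturbed passages links the two values, each
passage contributing a variation of at most `3 / 2`. -/
lemma logClose_local {C : Set Curve} (hno : ¬ CollectionHasTouching C) {γ₁ γ₂ : Curve}
    (h₁ : γ₁ ∈ C) (h₂ : γ₂ ∈ C) {s t : ℝ} (hs : s ∈ Icc 0 γ₁.len) (ht : t ∈ Icc 0 γ₂.len)
    (hst : γ₁.toFun s = γ₂.toFun t) {z : ℂ} {r : ℝ} (hr : 0 < r) (hz : r ≤ dist (γ₁.toFun s) z) :
    ∃ η > 0, ∃ ε > 0, ∀ g, IsPert C g ε → ∀ s' ∈ Icc 0 γ₁.len, ∀ t' ∈ Icc 0 γ₂.len,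
      dist s' s < η → dist t' t < η → LogClose C z r g γ₁ γ₂ s' t' := by
  obtain ⟨ε, hε, H⟩ := exists_crossing hno h₁ h₂ hs ht hst (δ := r / 4) (by positivity)
  obtain ⟨η₁, hη₁, H₁⟩ := γ₁.exists_near hs (ρ := r / 4 / 2) (by positivity)
  obtain ⟨η₂, hη₂, H₂⟩ := γ₂.exists_near ht (ρ := r / 4 / 2) (by positivity)
  refine ⟨min η₁ η₂, lt_min hη₁ hη₂, min ε (r / 4 / 2), lt_min hε.1 (by positivity), ?_⟩
  intro g hg s' hs' t' ht' hds hdt X L w hL hX hw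
  obtain ⟨a, ha, b, hb, hab⟩ := H g (hg.mono (min_le_left _ _))
  have hfar : 2 * (r / 4) ≤ dist (γ₁.toFun s) w := by
    have := dist_triangle (γ₁.toFun s) w z
    linarith
  have e1 := log_variation_passage (hg γ₁ h₁).1 hs hs' (by positivity) (min_le_right _ _)
    (hg γ₁ h₁).2 (H₁ s' hs' (hds.trans_le (min_le_left _ _))) hL (hX γ₁ h₁) hfar ha
  have e2 := log_variation_passage (hg γ₂ h₂).1 ht ht' (by positivity) (min_le_right _ _)
    (hg γ₂ h₂).2 (H₂ t' ht' (hdt.trans_le (min_le_right _ _))) hL (hX γ₂ h₂) (hst ▸ hfar) hb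
  rw [hab] at e1
  rw [norm_sub_rev] at e1
  have := norm_sub_le_norm_sub_add_norm_sub (L ((g γ₁).toFun s')) (L ((g γ₂).toFun b))
    (L ((g γ₂).toFun t'))
  linarith

/-- The size of the admissible perturbations can be chosen uniformly over all double points, by
compactness of the set of double points away from `z`. -/
lemma logClose_uniform {C : Set Curve} (hfin : C.Finite) (hno : ¬ CollectionHasTouching C) (z : ℂ)
    {r : ℝ} (hr : 0 < r) :
    ∃ ε > 0, ∀ g, IsPert C g ε → ∀ γ₁ ∈ C, ∀ γ₂ ∈ C, ∀ s ∈ Icc 0 γ₁.len, ∀ t ∈ Icc 0 γ₂.len,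
      γ₁.toFun s = γ₂.toFun t → r ≤ dist (γ₁.toFun s) z → LogClose C z r g γ₁ γ₂ s t := by
  have hpair : ∀ γ₁ ∈ C, ∀ γ₂ ∈ C, ∀ᶠ ε in 𝓝[>] (0 : ℝ), ∀ g, IsPert C g ε →
      ∀ s ∈ Icc 0 γ₁.len, ∀ t ∈ Icc 0 γ₂.len,
      γ₁.toFun s = γ₂.toFun t → r ≤ dist (γ₁.toFun s) z → LogClose C z r g γ₁ γ₂ s t := by
    intro γ₁ h₁ γ₂ h₂
    have hc₁ : ContinuousOn (fun p : ℝ × ℝ => γ₁.toFun p.1) (Icc 0 γ₁.len ×ˢ Icc 0 γ₂.len) :=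
      γ₁.cont.comp continuousOn_fst fun p hp => hp.1
    have hc₂ : ContinuousOn (fun p : ℝ × ℝ => γ₂.toFun p.2) (Icc 0 γ₁.len ×ˢ Icc 0 γ₂.len) :=
      γ₂.cont.comp continuousOn_snd fun p hp => hp.2
    set D : Set (ℝ × ℝ) := (Icc 0 γ₁.len ×ˢ Icc 0 γ₂.len) ∩
      (fun p : ℝ × ℝ => (dist (γ₁.toFun p.1) (γ₂.toFun p.2), dist (γ₁.toFun p.1) z)) ⁻¹'
        ({0} ×ˢ Ici r) with hD
    have hDc : IsCompact D := by
      refine (isCompact_Icc.prod isCompact_Icc).of_isClosed_subset ?_ inter_subset_left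
      exact ((continuous_dist.comp_continuousOn (hc₁.prodMk hc₂)).prodMk
        (continuous_dist.comp_continuousOn (hc₁.prodMk continuousOn_const))).preimage_isClosed_of_isClosed
        (isClosed_Icc.prod isClosed_Icc) (isClosed_singleton.prod isClosed_Ici)
    have hmain : ∀ᶠ ε in 𝓝[>] (0 : ℝ), ∀ g, IsPert C g ε → ∀ p ∈ D,
        LogClose C z r g γ₁ γ₂ p.1 p.2 := by
      refine hDc.induction_on (p := fun A => ∀ᶠ ε in 𝓝[>] (0 : ℝ), ∀ g, IsPert C g ε →
        ∀ p ∈ A, p ∈ D → LogClose C z r g γ₁ γ₂ p.1 p.2) ?_ ?_ ?_ ?_ |>.mono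
          fun ε h g hg p hp => h g hg p hp hp
      · simp
      · exact fun A B hAB hB => hB.mono fun ε h g hg p hp => h g hg p (hAB hp)
      · intro A B hA hB
        filter_upwards [hA, hB] with ε h h' g hg p hp
        exact hp.elim (h g hg p) (h' g hg p)
      · rintro ⟨s, t⟩ ⟨hp, hp'⟩
        obtain ⟨η, hη, ε, hε, H⟩ := logClose_local hno h₁ h₂ hp.1 hp.2
          (dist_eq_zero.1 hp'.1) hr hp'.2
        refine ⟨ball (s, t) η, mem_nhdsWithin_of_mem_nhds (ball_mem_nhds _ hη), ?_⟩
        filter_upwards [Ioo_mem_nhdsGT hε] with ε' hε' g hg p hpb hpD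
        rw [mem_ball, Prod.dist_eq, max_lt_iff] at hpb
        exact H g (hg.mono hε'.2.le) _ hpD.1.1 _ hpD.1.2 hpb.1 hpb.2
    refine hmain.mono fun ε h g hg s hs t ht hst hd => h g hg (s, t) ⟨⟨hs, ht⟩, ?_, hd⟩
    exact dist_eq_zero.2 hst
  have hall : ∀ᶠ ε in 𝓝[>] (0 : ℝ), ∀ γ₁ ∈ C, ∀ γ₂ ∈ C, ∀ g, IsPert C g ε →
      ∀ s ∈ Icc 0 γ₁.len, ∀ t ∈ Icc 0 γ₂.len,
      γ₁.toFun s = γ₂.toFun t → r ≤ dist (γ₁.toFun s) z → LogClose C z r g γ₁ γ₂ s t :=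
    (eventually_all_finite hfin).2 fun γ₁ h₁ => (eventually_all_finite hfin).2 fun γ₂ h₂ =>
      hpair γ₁ h₁ γ₂ h₂
  obtain ⟨ε, h, hε⟩ := (hall.and (self_mem_nhdsWithin : ∀ᶠ ε in 𝓝[>] (0 : ℝ), ε ∈ Ioi 0)).exists
  exact ⟨ε, hε, fun g hg γ₁ h₁ γ₂ h₂ => h γ₁ h₁ γ₂ h₂ g hg⟩

lemma mem_collRange {C : Set Curve} {x : ℂ} :
    x ∈ collRange C ↔ ∃ γ ∈ C, ∃ t ∈ Icc 0 γ.len, γ.toFun t = x := by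
  simp [collRange, Curve.range]

lemma isCompact_collRange {C : Set Curve} (hfin : C.Finite) : IsCompact (collRange C) :=
  hfin.isCompact_biUnion fun γ _ => γ.isCompact_range

/-- A branch of `log (x - w)` on a small perturbation of `C` descends to a branch of `log (x - z)`
on the part of `C` at distance at least `r` from `z`. It is defined through the
parametrisations; the absence of touchings makes it well defined at double points, since there the
candidate values differ by a multiple of `2πi` and by less than `2π`. -/
lemma exists_log_descent {C : Set Curve} (hfin : C.Finite) (hno : ¬ CollectionHasTouching C) (z : ℂ)
    {r : ℝ} (hr : 0 < r) :
    ∃ ε > 0, ∀ g, IsPert C g ε → ∀ X L w, IsLogOn L X w → (∀ γ ∈ C, (g γ).range ⊆ X) →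
      dist w z ≤ r / 8 → ∃ h, IsLogOn h (collRange C \ ball z r) z := by
  classical
  obtain ⟨ε₀, hε₀, H⟩ := logClose_uniform hfin hno z hr
  refine ⟨min ε₀ (r / 8), by positivity, fun g hg X L w hL hX hw => ?_⟩
  -- chosen so that `1 + q γ t = (γ t - z) / (g γ t - w)`
  set q : Curve → ℝ → ℂ := fun γ t =>
    ((γ.toFun t - (g γ).toFun t) + (w - z)) / ((g γ).toFun t - w) with hq
  set ℓ : Curve → ℝ → ℂ := fun γ t => L ((g γ).toFun t) + Complex.log (1 + q γ t) with hℓ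
  set T : Curve → Set ℝ := fun γ => Icc 0 γ.len ∩ γ.toFun ⁻¹' (ball z r)ᶜ with hT
  have hTc : ∀ γ, IsCompact (T γ) := fun γ => isCompact_Icc.of_isClosed_subset
    (γ.cont.preimage_isClosed_of_isClosed isClosed_Icc isOpen_ball.isClosed_compl) inter_subset_left
  have hTd : ∀ γ, ∀ t ∈ T γ, r ≤ dist (γ.toFun t) z := fun γ t ht => by simpa using ht.2
  have hTg : ∀ γ ∈ C, T γ ⊆ Icc 0 (g γ).len := fun γ hγ t ht => by rw [(hg γ hγ).1]; exact ht.1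
  have hTX : ∀ γ ∈ C, ∀ t ∈ T γ, (g γ).toFun t ∈ X :=
    fun γ hγ t ht => hX γ hγ ⟨t, hTg γ hγ ht, rfl⟩
  have hclose : ∀ γ ∈ C, ∀ t ∈ T γ, dist (γ.toFun t) ((g γ).toFun t) < r / 8 := fun γ hγ t ht =>
    (Curve.dist_le_dInf_of_len_eq (hg γ hγ).1 ht.1).trans_lt
      ((hg γ hγ).2.trans_le (min_le_right _ _))
  have hden : ∀ γ ∈ C, ∀ t ∈ T γ, r / 2 ≤ ‖(g γ).toFun t - w‖ := by
    intro γ hγ t ht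
    rw [← dist_eq_norm]
    have h1 := dist_triangle (γ.toFun t) ((g γ).toFun t) z
    have h2 := dist_triangle ((g γ).toFun t) w z
    linarith [hTd γ t ht, hclose γ hγ t ht]
  have hne : ∀ γ ∈ C, ∀ t ∈ T γ, (g γ).toFun t - w ≠ 0 := fun γ hγ t ht =>
    norm_pos_iff.1 (lt_of_lt_of_le (by positivity) (hden γ hγ t ht))
  have hqs : ∀ γ ∈ C, ∀ t ∈ T γ, ‖q γ t‖ ≤ 1 / 2 := by
    intro γ hγ t ht
    have h0 : 0 < ‖(g γ).toFun t - w‖ := norm_pos_iff.2 (hne γ hγ t ht)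
    simp only [hq]
    rw [norm_div, div_le_iff₀ h0]
    have h1 := norm_add_le (γ.toFun t - (g γ).toFun t) (w - z)
    rw [← dist_eq_norm (γ.toFun t), ← dist_eq_norm w z] at h1
    linarith [hden γ hγ t ht, hclose γ hγ t ht]
  have hslit : ∀ γ ∈ C, ∀ t ∈ T γ, 1 + q γ t ∈ Complex.slitPlane := fun γ hγ t ht =>
    Complex.mem_slitPlane_of_norm_lt_one ((hqs γ hγ t ht).trans_lt (by norm_num))
  have hcont : ∀ γ ∈ C, ContinuousOn (ℓ γ) (T γ) := by
    intro γ hγ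
    have c1 : ContinuousOn γ.toFun (T γ) := γ.cont.mono inter_subset_left
    have c2 : ContinuousOn (g γ).toFun (T γ) := (g γ).cont.mono (hTg γ hγ)
    refine (hL.1.comp c2 (hTX γ hγ)).add (ContinuousOn.clog ?_ (hslit γ hγ))
    exact continuousOn_const.add (((c1.sub c2).add continuousOn_const).div
      (c2.sub continuousOn_const) (hne γ hγ))
  have hexp : ∀ γ ∈ C, ∀ t ∈ T γ, Complex.exp (ℓ γ t) = γ.toFun t - z := by
    intro γ hγ t ht
    simp only [hℓ]
    rw [Complex.exp_add, hL.2 _ (hTX γ hγ t ht),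
      Complex.exp_log (Complex.slitPlane_ne_zero (hslit γ hγ t ht))]
    have := hne γ hγ t ht
    simp only [hq]
    field_simp
    ring
  have hwd : ∀ γ₁ ∈ C, ∀ γ₂ ∈ C, ∀ s ∈ T γ₁, ∀ t ∈ T γ₂, γ₁.toFun s = γ₂.toFun t →
      ℓ γ₁ s = ℓ γ₂ t := by
    intro γ₁ h₁ γ₂ h₂ s hs t ht hst
    have hb : ‖ℓ γ₁ s - ℓ γ₂ t‖ ≤ 9 / 2 := by
      have e0 := H g (hg.mono (min_le_left _ _)) γ₁ h₁ γ₂ h₂ s hs.1 t ht.1 hst (hTd γ₁ s hs)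
        X L w hL hX hw
      have e1 := norm_log_one_add_le_of_half (hqs γ₁ h₁ s hs)
      have e2 := norm_log_one_add_le_of_half (hqs γ₂ h₂ t ht)
      have : ℓ γ₁ s - ℓ γ₂ t = (L ((g γ₁).toFun s) - L ((g γ₂).toFun t)) +
          (Complex.log (1 + q γ₁ s) - Complex.log (1 + q γ₂ t)) := by simp only [hℓ]; ring
      rw [this]
      have e3 := norm_add_le (L ((g γ₁).toFun s) - L ((g γ₂).toFun t))
        (Complex.log (1 + q γ₁ s) - Complex.log (1 + q γ₂ t))
      have e4 := norm_sub_le (Complex.log (1 + q γ₁ s)) (Complex.log (1 + q γ₂ t))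
      linarith
    have he : Complex.exp (ℓ γ₁ s) = Complex.exp (ℓ γ₂ t) := by
      rw [hexp γ₁ h₁ s hs, hexp γ₂ h₂ t ht, hst]
    obtain ⟨n, hn⟩ := Complex.exp_eq_exp_iff_exists_int.1 he
    have hn' : ℓ γ₁ s - ℓ γ₂ t = n * (2 * Real.pi * Complex.I) := by rw [hn]; ring
    have hn0 : n = 0 := by
      by_contra hne0
      have h1 : (1 : ℝ) ≤ |(n : ℝ)| := by exact_mod_cast Int.one_le_abs hne0
      rw [hn', norm_mul, norm_mul, norm_mul, Complex.norm_I, Complex.norm_real, Complex.norm_ofNat,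
        Complex.norm_intCast, Real.norm_eq_abs, abs_of_pos Real.pi_pos, mul_one] at hb
      nlinarith [Real.pi_gt_three]
    rw [hn, hn0]
    simp
  have hsel : ∀ x ∈ collRange C \ ball z r, ∃ p : Curve × ℝ, p.1 ∈ C ∧ p.2 ∈ T p.1 ∧
      p.1.toFun p.2 = x := by
    rintro x ⟨hx, hxr⟩
    obtain ⟨γ, hγ, t, ht, rfl⟩ := mem_collRange.1 hx
    exact ⟨(γ, t), hγ, ⟨ht, hxr⟩, rfl⟩
  have : Nonempty (Curve × ℝ) := ⟨(⟨0, le_rfl, fun _ => 0, continuousOn_const⟩, 0)⟩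
  choose! p hpC hpT hpx using hsel
  have hval : ∀ γ ∈ C, ∀ t ∈ T γ, ℓ (p (γ.toFun t)).1 (p (γ.toFun t)).2 = ℓ γ t := by
    intro γ hγ t ht
    have hmem : γ.toFun t ∈ collRange C \ ball z r :=
      ⟨mem_collRange.2 ⟨γ, hγ, t, ht.1, rfl⟩, ht.2⟩
    exact hwd _ (hpC _ hmem) _ hγ _ (hpT _ hmem) _ ht (hpx _ hmem)
  refine ⟨fun x => ℓ (p x).1 (p x).2, ?_, ?_⟩
  · -- the preimage of a closed set is a finite union of compact images of sets of times
    rw [continuousOn_iff_isClosed]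
    intro F hF
    have hcomp : IsCompact (⋃ γ ∈ C, γ.toFun '' (T γ ∩ ℓ γ ⁻¹' F)) := by
      refine hfin.isCompact_biUnion fun γ hγ => ?_
      refine IsCompact.image_of_continuousOn ?_
        (γ.cont.mono (inter_subset_left.trans inter_subset_left))
      exact (hTc γ).of_isClosed_subset
        ((hcont γ hγ).preimage_isClosed_of_isClosed (hTc γ).isClosed hF) inter_subset_left
    refine ⟨_, hcomp.isClosed, ?_⟩
    ext x
    constructor
    · rintro ⟨hxF, hx⟩
      refine ⟨mem_biUnion (hpC x hx) ⟨(p x).2, ⟨hpT x hx, hxF⟩, hpx x hx⟩, hx⟩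
    · rintro ⟨hxU, hx⟩
      obtain ⟨γ, hγ, t, ⟨ht, htF⟩, rfl⟩ := mem_iUnion₂.1 hxU
      refine ⟨?_, hx⟩
      change ℓ _ _ ∈ F
      rw [hval γ hγ t ht]
      exact htF
  · intro x hx
    rw [hexp _ (hpC x hx) _ (hpT x hx), hpx x hx]

/-! ### Convergence of exteriors, boundaries and hulls -/

/-- Inclusions that hold eventually near every point of a compact set hold eventually on it. -/
lemma eventually_inter_subset {S : Set ℂ} (hS : IsCompact S) {E F : ℕ → Set ℂ}
    (h : ∀ p ∈ S, ∃ ρ > 0, ∀ᶠ N in atTop, ball p ρ ∩ E N ⊆ F N) :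
    ∀ᶠ N in atTop, S ∩ E N ⊆ F N := by
  refine hS.induction_on (p := fun U => ∀ᶠ N in atTop, U ∩ E N ⊆ F N) ?_ ?_ ?_ ?_
  · simp
  · exact fun A B hAB hB => hB.mono fun N hN => (inter_subset_inter_left _ hAB).trans hN
  · intro A B hA hB
    filter_upwards [hA, hB] with N h1 h2
    rw [union_inter_distrib_right]
    exact union_subset h1 h2
  · intro p hp
    obtain ⟨ρ, hρ, H⟩ := h p hp
    exact ⟨ball p ρ, mem_nhdsWithin_of_mem_nhds (ball_mem_nhds p hρ), H⟩

/-- A point of the exterior of a compact set can be joined to a far away point within a compact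
connected subset of the complement. -/
lemma exists_compact_witness {K : Set ℂ} (hK : IsCompact K) {z : ℂ} (hz : z ∈ extSet K) (R : ℝ) :
    ∃ Q, IsCompact Q ∧ IsPreconnected Q ∧ Q ⊆ Kᶜ ∧ z ∈ Q ∧ ∃ v ∈ Q, R < ‖v‖ := by
  have hzK : z ∈ Kᶜ := fun h => mem_compl_of_mem_extSet hz (subset_closure h)
  have hz' : ¬ IsBounded (connectedComponentIn Kᶜ z) := by
    have : z ∈ extSet K := hz
    simpa [extSet, hK.isClosed.closure_eq] using this
  have ho : IsOpen (connectedComponentIn Kᶜ z) := hK.isClosed.isOpen_compl.connectedComponentIn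
  have hzm : z ∈ connectedComponentIn Kᶜ z := mem_connectedComponentIn hzK
  obtain ⟨v, hv, hvR⟩ : ∃ v ∈ connectedComponentIn Kᶜ z, R < ‖v‖ := by
    by_contra! h
    exact hz' ((isBounded_closedBall (x := (0:ℂ)) (r := R)).subset fun v hv => by simpa using h v hv)
  have hpc : IsPathConnected (connectedComponentIn Kᶜ z) :=
    ho.isConnected_iff_isPathConnected.1 ⟨⟨z, hzm⟩, isPreconnected_connectedComponentIn⟩
  obtain ⟨γ, hγ⟩ := hpc.joinedIn z hzm v hv
  refine ⟨range γ, isCompact_range γ.continuous, isPreconnected_range γ.continuous, ?_,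
    ⟨0, γ.source⟩, v, ⟨1, γ.target⟩, hvR⟩
  rintro _ ⟨t, rfl⟩
  exact connectedComponentIn_subset _ _ (hγ t)

/-- Points of the exterior of the limit eventually lie in the exteriors of the approximations. -/
lemma eventually_mem_extSet {K : Set ℂ} (hK : IsCompact K) {KN : ℕ → Set ℂ} {R : ℝ} (hR : 0 ≤ R)
    (hKN : ∀ᶠ N in atTop, KN N ⊆ closedBall 0 R)
    (hsub : ∀ η > 0, ∀ᶠ N in atTop, KN N ⊆ thickening η K) {z : ℂ} (hz : z ∈ extSet K) :
    ∀ᶠ N in atTop, z ∈ extSet (KN N) := by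
  obtain ⟨Q, hQc, hQp, hQK, hzQ, v, hv, hvR⟩ := exists_compact_witness hK hz R
  obtain ⟨δ, hδ, hQδ⟩ := hQc.exists_thickening_subset_open hK.isClosed.isOpen_compl hQK
  filter_upwards [hKN, hsub (δ / 2) (by positivity)] with N h1 h2
  refine mem_extSet_of_ray hR h1 hQp ?_ hv hvR hzQ
  intro x hx hxc
  obtain ⟨y, hy, hxy⟩ := Metric.mem_closure_iff.1 hxc (δ / 2) (by positivity)
  obtain ⟨k, hk, hyk⟩ := mem_thickening_iff.1 (h2 hy)
  refine hQδ (mem_thickening_iff.2 ⟨x, hx, ?_⟩) hk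
  have := dist_triangle x y k
  rw [dist_comm]
  linarith

lemma eventually_ext_subset {K : Set ℂ} (hK : IsCompact K) {KN : ℕ → Set ℂ} {R : ℝ} (hR : 0 ≤ R)
    (hKN : ∀ᶠ N in atTop, KN N ⊆ closedBall 0 R)
    (hsub : ∀ η > 0, ∀ᶠ N in atTop, KN N ⊆ thickening η K) {η : ℝ} (hη : 0 < η) :
    ∀ᶠ N in atTop, extSet K ⊆ thickening η (extSet (KN N)) := by
  have hloc := eventually_inter_subset (isCompact_closedBall (0 : ℂ) R) (E := fun _ => extSet K)
    (F := fun N => thickening η (extSet (KN N))) fun p _ => by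
      refine ⟨η / 2, by positivity, ?_⟩
      by_cases h : ∃ z ∈ extSet K, z ∈ ball p (η / 2)
      · obtain ⟨z, hz, hzp⟩ := h
        filter_upwards [eventually_mem_extSet hK hR hKN hsub hz] with N hN w hw
        refine mem_thickening_iff.2 ⟨z, hN, ?_⟩
        have h1 := dist_triangle_right w z p
        linarith [mem_ball.1 hw.1, mem_ball.1 hzp]
      · push Not at h
        exact Eventually.of_forall fun N w hw => absurd hw.1 (h w hw.2)
  filter_upwards [hKN, hloc] with N h1 h2 z hz
  by_cases hzR : z ∈ closedBall 0 R
  · exact h2 ⟨hzR, hz⟩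
  · rw [mem_closedBall_zero_iff, not_le] at hzR
    exact self_subset_thickening hη _ (mem_extSet_of_far hR h1 hzR)

/-- If no point of `Ext K` is near `z`, then removing a smaller ball around `z` from `K` does not put
`z` into the exterior. -/
lemma not_mem_extSet_diff_ball {K : Set ℂ} (hK : IsCompact K) {z : ℂ} {r η : ℝ} (hr : r < η)
    (hη : 0 < η) (hz : ∀ y ∈ extSet K, y ∉ ball z η) : z ∉ extSet (K \ ball z r) := by
  intro hzE
  have hc : IsCompact (K \ ball z r) := hK.diff isOpen_ball
  obtain ⟨R, hR⟩ := hK.isBounded.subset_closedBall 0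
  have hR' : K ⊆ closedBall 0 (max R 0) := hR.trans (closedBall_subset_closedBall (le_max_left _ _))
  obtain ⟨Q, -, hQp, hQK, hzQ, v, hv, hvR⟩ := exists_compact_witness hc hzE (max R 0)
  obtain ⟨p, hpQ, hp⟩ := meets_frontier hQp (isOpen_extSet K) hv
    (mem_extSet_of_far (le_max_right _ _) hR' hvR) hzQ fun h => hz z h (mem_ball_self hη)
  have hpK : p ∈ K := hK.isClosed.closure_eq ▸ frontier_extSet_subset K hp
  have hpb : p ∈ ball z r := by
    by_contra h
    exact hQK hpQ ⟨hpK, h⟩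
  obtain ⟨y, hy, hpy⟩ := Metric.mem_closure_iff.1 (frontier_subset_closure hp) (η - r)
    (by linarith)
  refine hz y hy ?_
  rw [mem_ball] at hpb ⊢
  have := dist_triangle_left y z p
  linarith

/-- The heart of the matter: the exteriors of the approximations cannot leak into the hull of the
limit, since a branch of the logarithm seen from the leaked point would descend to the limit. -/
lemma eventually_ext_subset_limit {CN : ℕ → Set Curve} {C : Set Curve} (hfin : C.Finite)
    (hconv : ∀ δ : ℝ, 0 < δ → ∀ᶠ N in atTop, ∀ γ' ∈ C, ∃ γ ∈ CN N, Curve.dInf γ γ' < δ)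
    (hno : ¬ CollectionHasTouching C)
    (hbdd : ∀ᶠ N in atTop, IsBounded (collRange (CN N))) {η : ℝ} (hη : 0 < η) :
    ∀ᶠ N in atTop, extSet (collRange (CN N)) ⊆ thickening η (extSet (collRange C)) := by
  have hK := isCompact_collRange hfin
  obtain ⟨R, hR⟩ := hK.isBounded.subset_closedBall 0
  have hR' : collRange C ⊆ closedBall 0 (max R 0) :=
    hR.trans (closedBall_subset_closedBall (le_max_left _ _))
  have hloc := eventually_inter_subset (isCompact_closedBall (0 : ℂ) (max R 0))
    (E := fun N => extSet (collRange (CN N)))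
    (F := fun _ => thickening η (extSet (collRange C))) fun z _ => by
      by_cases h : ∃ y ∈ extSet (collRange C), y ∈ ball z η
      · obtain ⟨y, hy, hyz⟩ := h
        rw [mem_ball] at hyz
        refine ⟨η - dist y z, by linarith, Eventually.of_forall fun N w hw => ?_⟩
        refine mem_thickening_iff.2 ⟨y, hy, ?_⟩
        have h1 := dist_triangle_right w y z
        linarith [mem_ball.1 hw.1]
      · push Not at h
        obtain ⟨ε, hε, H⟩ := exists_log_descent hfin hno z (r := η / 2) (by positivity)
        refine ⟨η / 2 / 8, by positivity, ?_⟩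
        filter_upwards [hconv ε hε, hbdd] with N hN hb
        rintro w ⟨hwz, hw⟩
        exfalso
        obtain ⟨L, hL⟩ := exists_log_of_mem_extSet hb hw
        have : Nonempty Curve := ⟨⟨0, le_rfl, fun _ => 0, continuousOn_const⟩⟩
        choose! f hfC hfd using hN
        obtain ⟨l, hl⟩ := H (fun γ => (f γ).rescale γ.len γ.len_nonneg)
          (fun γ hγ => ⟨rfl, (Curve.dInf_rescale_le γ (f γ)).trans_lt (hfd γ hγ)⟩) _ L w hL
          (fun γ hγ => ((f γ).range_rescale_subset _).trans
            ((subset_biUnion_of_mem (u := Curve.range) (hfC γ hγ)).trans subset_closure))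
          (mem_ball.1 hwz).le
        exact not_mem_extSet_diff_ball hK (by linarith) hη h
          (mem_extSet_of_log (hK.diff isOpen_ball) hl)
  filter_upwards [hloc] with N h2 z hz
  by_cases hzR : z ∈ closedBall 0 (max R 0)
  · exact h2 ⟨hzR, hz⟩
  · rw [mem_closedBall_zero_iff, not_le] at hzR
    exact self_subset_thickening hη _ (mem_extSet_of_far (le_max_right _ _) hR' hzR)

/-- One-sided closeness of the exteriors and of the sets gives one-sided closeness of the outer
boundaries: near a point of `∂ Ext A` there are points of `Ext A'` and of `A'`, so a small ball
around it meets `∂ Ext A'`. -/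
lemma frontier_subset_thickening {A A' : Set ℂ} {η : ℝ} (hη : 0 < η) (hA : A ⊆ thickening η A')
    (hE : extSet A ⊆ thickening η (extSet A')) :
    frontier (extSet A) ⊆ thickening (3 * η) (frontier (extSet A')) := by
  intro z hz
  obtain ⟨x, hx, hzx⟩ := Metric.mem_closure_iff.1 (frontier_extSet_subset A hz) η hη
  obtain ⟨x', hx', hxx⟩ := mem_thickening_iff.1 (hA hx)
  obtain ⟨y, hy, hzy⟩ := Metric.mem_closure_iff.1 (frontier_subset_closure hz) η hη
  obtain ⟨y', hy', hyy⟩ := mem_thickening_iff.1 (hE hy)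
  obtain ⟨p, hp, hpf⟩ := meets_frontier (convex_ball z (3 * η)).isPreconnected (isOpen_extSet A')
    (a := y') (b := x')
    (by rw [mem_ball']; linarith [dist_triangle z y y']) hy'
    (by rw [mem_ball']; linarith [dist_triangle z x x'])
    fun h => mem_compl_of_mem_extSet h (subset_closure hx')
  exact mem_thickening_iff.2 ⟨p, hpf, mem_ball'.1 hp⟩

/-- For hulls the inclusion of exteriors is needed in the opposite direction: a point of
`Hull A ∩ Ext A'` is close to `Ext A`, hence to `∂ Ext A ⊆ closure A`, hence to `A'`. -/
lemma hull_subset_thickening {A A' : Set ℂ} {η : ℝ} (hη : 0 < η) (hA : A ⊆ thickening η A')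
    (hE : extSet A' ⊆ thickening η (extSet A)) :
    hullSet A ⊆ thickening (3 * η) (hullSet A') := by
  intro z hz
  by_cases hzA : z ∈ extSet A'
  · obtain ⟨y, hy, hzy⟩ := mem_thickening_iff.1 (hE hzA)
    obtain ⟨p, hp, hpf⟩ := meets_frontier (convex_ball z η).isPreconnected (isOpen_extSet A)
      (mem_ball'.2 hzy) hy (mem_ball_self hη) hz
    obtain ⟨x, hx, hpx⟩ := Metric.mem_closure_iff.1 (frontier_extSet_subset A hpf) η hη
    obtain ⟨x', hx', hxx⟩ := mem_thickening_iff.1 (hA hx)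
    refine mem_thickening_iff.2 ⟨x', fun h => mem_compl_of_mem_extSet h (subset_closure hx'), ?_⟩
    linarith [dist_triangle4 z p x x', mem_ball'.1 hp]
  · exact self_subset_thickening (by positivity) _ hzA

lemma collRange_subset_thickening {C C' : Set Curve} {η : ℝ}
    (h : ∀ γ ∈ C, ∃ γ' ∈ C', Curve.dInf γ γ' < η) : collRange C ⊆ thickening η (collRange C') := by
  refine iUnion₂_subset fun γ hγ x hx => ?_
  obtain ⟨γ', hγ', hd⟩ := h γ hγ
  obtain ⟨y, hy, hxy⟩ := Curve.exists_dist_le_dInf_left (γ' := γ') hx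
  exact mem_thickening_iff.2 ⟨y, mem_biUnion hγ' hy, hxy.trans_lt hd⟩

lemma collRange_subset_thickening' {C C' : Set Curve} {η : ℝ}
    (h : ∀ γ' ∈ C', ∃ γ ∈ C, Curve.dInf γ γ' < η) : collRange C' ⊆ thickening η (collRange C) := by
  refine iUnion₂_subset fun γ' hγ' x hx => ?_
  obtain ⟨γ, hγ, hd⟩ := h γ' hγ'
  obtain ⟨y, hy, hxy⟩ := Curve.exists_dist_le_dInf_right (γ := γ) hx
  exact mem_thickening_iff.2 ⟨y, mem_biUnion hγ hy, hxy.trans_lt hd⟩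

theorem stmt5 (CN : ℕ → Set Curve) (C : Set Curve) (hfin : C.Finite)
    (hconv : ∀ δ : ℝ, 0 < δ → ∀ᶠ N in Filter.atTop,
      (∀ γ ∈ CN N, ∃ γ' ∈ C, Curve.dInf γ γ' < δ) ∧
      (∀ γ' ∈ C, ∃ γ ∈ CN N, Curve.dInf γ γ' < δ))
    (hno : ¬ CollectionHasTouching C) :
    (∀ δ : ℝ, 0 < δ → ∀ᶠ N in Filter.atTop,
      dHLt (extSet (collRange (CN N))) (extSet (collRange C)) δ) ∧
    (∀ δ : ℝ, 0 < δ → ∀ᶠ N in Filter.atTop,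
      dHLt (outerBoundary (collRange (CN N))) (outerBoundary (collRange C)) δ) ∧
    (∀ δ : ℝ, 0 < δ → ∀ᶠ N in Filter.atTop,
      dHLt (hullSet (collRange (CN N))) (hullSet (collRange C)) δ) := by
  have hK := isCompact_collRange hfin
  have hsub : ∀ η > 0, ∀ᶠ N in atTop, collRange (CN N) ⊆ thickening η (collRange C) :=
    fun η hη => (hconv η hη).mono fun N h => collRange_subset_thickening h.1
  have hsub' : ∀ η > 0, ∀ᶠ N in atTop, collRange C ⊆ thickening η (collRange (CN N)) :=
    fun η hη => (hconv η hη).mono fun N h => collRange_subset_thickening' h.2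
  obtain ⟨R, hR0, hR⟩ : ∃ R : ℝ, 0 ≤ R ∧
      ∀ᶠ N in atTop, collRange (CN N) ⊆ closedBall 0 R := by
    obtain ⟨R, hR⟩ := (hK.isBounded.thickening (δ := 1)).subset_closedBall 0
    exact ⟨max R 0, le_max_right _ _, (hsub 1 one_pos).mono fun N h =>
      h.trans (hR.trans (closedBall_subset_closedBall (le_max_left _ _)))⟩
  have hE : ∀ η > 0, ∀ᶠ N in atTop, extSet (collRange C) ⊆ thickening η (extSet (collRange (CN N))) :=
    fun η hη => eventually_ext_subset hK hR0 hR hsub hη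
  have hE' : ∀ η > 0, ∀ᶠ N in atTop, extSet (collRange (CN N)) ⊆ thickening η (extSet (collRange C)) :=
    fun η hη => eventually_ext_subset_limit hfin (fun δ hδ => (hconv δ hδ).mono fun N h => h.2) hno
      (hR.mono fun N h => isBounded_closedBall.subset h) hη
  refine ⟨fun δ hδ => ?_, fun δ hδ => ?_, fun δ hδ => ?_⟩
  · filter_upwards [hE (δ / 2) (by positivity), hE' (δ / 2) (by positivity)] with N h1 h2
    exact ⟨δ / 2, by positivity, by linarith, h2, h1⟩
  · filter_upwards [hE (δ / 6) (by positivity), hE' (δ / 6) (by positivity),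
      hsub (δ / 6) (by positivity), hsub' (δ / 6) (by positivity)] with N h1 h2 h3 h4
    exact ⟨3 * (δ / 6), by positivity, by linarith,
      frontier_subset_thickening (by positivity) h3 h2,
      frontier_subset_thickening (by positivity) h4 h1⟩
  · filter_upwards [hE (δ / 6) (by positivity), hE' (δ / 6) (by positivity),
      hsub (δ / 6) (by positivity), hsub' (δ / 6) (by positivity)] with N h1 h2 h3 h4
    exact ⟨3 * (δ / 6), by positivity, by linarith,
      hull_subset_thickening (by positivity) h3 h1,
      hull_subset_thickening (by positivity) h4 h2⟩
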